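/- Let k be an algebraically closed field of characteristic zero, G a finite abelian group, and Ĝ the group of characters G → kˣ. Let g ∈ G have order n ≥ 2 and let χ ∈ Ĝ be such that q := χ(g) has order n. Let F be a field extension of k, let ψ : Ĝ × Ĝ → Fˣ satisfy the 2-cocycle identity ψ(α,β)·ψ(αβ,γ) = ψ(β,γ)·ψ(α,βγ) for all α, β, γ ∈ Ĝ, and let c : Ĝ → F satisfy: c(α) = 0 whenever α(g) = 1, and α(g)·ψ(α,βχ)·c(β) + ψ(αχ,β)·c(α) = ψ(α,β)·c(αβ) for all α, β ∈ Ĝ. Then for every α ∈ Ĝ one has c(α)·ψ(χ,χ)·(1 − q) = c(χ)·(1 − α(g))·ψ(χ,α). -/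

import Mathlib

/-- The main recursion computation in the proof of Theorem 3.3: the structure
constants `c(α)` with the stated vanishing and recursion satisfy
`c(α)·ψ(χ,χ)·(1−q) = c(χ)·(1−α(g))·ψ(χ,α)` for all characters `α`. -/
theorem stmt_6 (k : Type*) [Field k] [IsAlgClosed k] [CharZero k]
    (G : Type*) [CommGroup G] [Fintype G]
    (g : G) (n : ℕ) (hn : 2 ≤ n) (hg : orderOf g = n)
    (χ : G →* kˣ) (hq : orderOf (χ g) = n)
    (F : Type*) [Field F] [Algebra k F]
    (ψ : (G →* kˣ) → (G →* kˣ) → Fˣ)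
    (hcocycle : ∀ α β γ : G →* kˣ,
      ψ α β * ψ (α * β) γ = ψ β γ * ψ α (β * γ))
    (c : (G →* kˣ) → F)
    (hc0 : ∀ α : G →* kˣ, α g = 1 → c α = 0)
    (hrec : ∀ α β : G →* kˣ,
      algebraMap k F ((α g : kˣ) : k) * ((ψ α (β * χ) : Fˣ) : F) * c β
        + ((ψ (α * χ) β : Fˣ) : F) * c α
        = ((ψ α β : Fˣ) : F) * c (α * β)) :
    ∀ α : G →* kˣ,
      c α * ((ψ χ χ : Fˣ) : F) * (1 - algebraMap k F ((χ g : kˣ) : k)) =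
      c χ * (1 - algebraMap k F ((α g : kˣ) : k)) * ((ψ χ α : Fˣ) : F) := by
  have step : ∀ β : G →* kˣ,
      c β * ((ψ χ χ : Fˣ) : F) * (1 - algebraMap k F ((χ g : kˣ) : k)) =
        c χ * (1 - algebraMap k F ((β g : kˣ) : k)) * ((ψ χ β : Fˣ) : F) →
      c (χ * β) * ((ψ χ χ : Fˣ) : F) * (1 - algebraMap k F ((χ g : kˣ) : k)) =
        c χ * (1 - algebraMap k F (((χ * β) g : kˣ) : k)) * ((ψ χ (χ * β) : Fˣ) : F) := by
    intro β h
    have h1 := hrec χ β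
    have h2 : ((ψ χ χ : Fˣ) : F) * ((ψ (χ * χ) β : Fˣ) : F)
        = ((ψ χ β : Fˣ) : F) * ((ψ χ (χ * β) : Fˣ) : F) := by
      exact_mod_cast congrArg (fun u : Fˣ => (u : F)) (hcocycle χ χ β)
    rw [mul_comm β χ] at h1
    have h3 : ((ψ χ β : Fˣ) : F) ≠ 0 := (ψ χ β).ne_zero
    apply mul_left_cancel₀ h3
    rw [MonoidHom.mul_apply, Units.val_mul, map_mul]
    linear_combination
      (-(((ψ χ χ : Fˣ) : F) * (1 - algebraMap k F ((χ g : kˣ) : k)))) * h1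
      + (algebraMap k F ((χ g : kˣ) : k) * ((ψ χ (χ * β) : Fˣ) : F)) * h
      + (1 - algebraMap k F ((χ g : kˣ) : k)) * c χ * h2
  intro α
  have hprim : IsPrimitiveRoot (((χ g : kˣ) : k)) n := by
    rw [IsPrimitiveRoot.coe_units_iff, ← hq]
    exact IsPrimitiveRoot.orderOf _
  have hpow : ((α g : kˣ) : k) ^ n = 1 := by
    rw [← Units.val_pow_eq_pow_val, ← map_pow, ← hg, pow_orderOf_eq_one, map_one, Units.val_one]
  have : NeZero n := ⟨by omega⟩
  obtain ⟨i, -, hi⟩ := hprim.eq_pow_of_pow_eq_one hpow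
  have hi' : (χ g) ^ i = α g := by
    apply Units.ext
    rw [Units.val_pow_eq_pow_val, hi]
  have key : ∀ (j : ℕ) (γ : G →* kˣ), γ g = 1 →
      c (χ ^ j * γ) * ((ψ χ χ : Fˣ) : F) * (1 - algebraMap k F ((χ g : kˣ) : k)) =
        c χ * (1 - algebraMap k F (((χ ^ j * γ) g : kˣ) : k))
          * ((ψ χ (χ ^ j * γ) : Fˣ) : F) := by
    intro j γ hγ
    induction j with
    | zero =>
      have e : χ ^ 0 * γ = γ := by
        refine MonoidHom.ext fun x => ?_
        simp only [MonoidHom.mul_apply, MonoidHom.pow_apply, pow_zero, one_mul]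
      rw [e, hc0 γ hγ, hγ]
      simp
    | succ j ih =>
      have e : χ ^ (j + 1) * γ = χ * (χ ^ j * γ) := by
        refine MonoidHom.ext fun x => ?_
        simp only [MonoidHom.mul_apply, MonoidHom.pow_apply, pow_succ', mul_assoc]
      rw [e]
      exact step _ ih
  have h := key i ((χ ^ i)⁻¹ * α) (by
    rw [MonoidHom.mul_apply, MonoidHom.inv_apply, MonoidHom.pow_apply, hi', inv_mul_cancel])
  have e : χ ^ i * ((χ ^ i)⁻¹ * α) = α := by
    refine MonoidHom.ext fun x => ?_
    simp only [MonoidHom.mul_apply, MonoidHom.inv_apply, mul_inv_cancel_left]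
  rwa [e] at h
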